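/- Suppose the family F of metrics satisfies the local log-Lipschitz condition (L) and h satisfies the time-Lipschitz condition (H). Then the generalized Lorentzian product hI×_F X satisfies the push-up property: for all p, q, r ∈ I×X, if (p ≤ q and q ≪ r) or (p ≪ q and q ≤ r), then p ≪ r. -/

import Mathlib

open Filter MeasureTheory Set Topology
open scoped ENNReal NNReal

noncomputable section

/-- The metric speed of a curve `β` at time `t` w.r.t. a distance function `dist`. -/
def mSpeed {X : Type*} (dst : X → X → ℝ) (β : ℝ → X) (t : ℝ) : ℝ :=
  Filter.limsup (fun e : ℝ => dst (β (t + e)) (β t) / |e|) (nhdsWithin (0 : ℝ) {0}ᶜ)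

/-- The generalized metric speed `v_β(s,t)` of a curve `β` w.r.t. the family of
metrics `d`. -/
def genSpeed {X : Type*} (d : ℝ → X → X → ℝ) (β : ℝ → X) (s t : ℝ) : ℝ :=
  Filter.limsup (fun e : ℝ => (∫ u in t..(t + e), mSpeed (d s) β u) / e)
    (nhdsWithin (0 : ℝ) {0}ᶜ)

/-- Absolute continuity of a curve on `[a,b]` w.r.t. a distance function. -/
def ACOn {X : Type*} (dst : X → X → ℝ) (β : ℝ → X) (a b : ℝ) : Prop :=
  ∃ g : ℝ → ℝ, MeasureTheory.IntegrableOn g (Set.Icc a b) ∧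
    ∀ ⦃t u : ℝ⦄, t ∈ Set.Icc a b → u ∈ Set.Icc a b → t ≤ u →
      dst (β t) (β u) ≤ ∫ r in t..u, g r

/-- The standard distance on `ℝ`. -/
def rdist : ℝ → ℝ → ℝ := fun x y => |x - y|

/-- `d` is a family of metrics on `X` indexed by `s ∈ I`, each generating the
topology of `X`. -/
def IsMetricFamily {X : Type*} [TopologicalSpace X] (I : Set ℝ) (d : ℝ → X → X → ℝ) : Prop :=
  ∀ s ∈ I,
    (∀ x : X, d s x x = 0) ∧ (∀ x y : X, x ≠ y → 0 < d s x y) ∧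
    (∀ x y : X, d s x y = d s y x) ∧ (∀ x y z : X, d s x z ≤ d s x y + d s y z) ∧
    (∀ x : X, (nhds x).HasBasis (fun ε : ℝ => 0 < ε) (fun ε => {y | d s x y < ε}))

/-- Condition (C): local uniform continuity of `s ↦ d_s` in a logarithmic sense. -/
def CondC {X : Type*} [TopologicalSpace X] (I : Set ℝ) (d : ℝ → X → X → ℝ) : Prop :=
  ∀ J : Set ℝ, ∀ K : Set X, J ⊆ I → IsCompact J → IsCompact K →
    ∃ r > (0 : ℝ), ∃ ω : ℝ → ℝ, ω 0 = 0 ∧ Monotone ω ∧ ContinuousAt ω 0 ∧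
      ∀ s ∈ J, ∀ s' ∈ J, ∀ x ∈ K, ∀ y ∈ K, x ≠ y →
        sInf ((fun u => d u x y) '' J) < r →
        |Real.log (d s x y / d s' x y)| ≤ ω |s - s'|

/-- Condition (L): local log-Lipschitz dependence of `d_s` on `s`. -/
def CondL {X : Type*} [TopologicalSpace X] (I : Set ℝ) (d : ℝ → X → X → ℝ) : Prop :=
  ∀ J : Set ℝ, ∀ K : Set X, J ⊆ I → IsCompact J → IsCompact K →
    ∃ C > (0 : ℝ), ∃ r > (0 : ℝ),
      ∀ s ∈ J, ∀ s' ∈ J, ∀ x ∈ K, ∀ y ∈ K, x ≠ y →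
        sInf ((fun u => d u x y) '' J) < r →
        |Real.log (d s x y / d s' x y)| ≤ C * |s - s'|

/-- Condition (H): Lipschitz continuity of `h` in the time variable, locally
uniformly. -/
def CondH {X : Type*} [TopologicalSpace X] (I : Set ℝ) (h : ℝ → X → ℝ) : Prop :=
  ∀ J : Set ℝ, ∀ K : Set X, J ⊆ I → IsCompact J → IsCompact K →
    ∃ C' > (0 : ℝ), ∀ s ∈ J, ∀ s' ∈ J, ∀ x ∈ K, |h s x - h s' x| ≤ C' * |s - s'|

/-- A curve `(α, β) : [a,b] → I × X` with both components absolutely continuous. -/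
def CurveIn {X : Type*} (I : Set ℝ) (d : ℝ → X → X → ℝ) (α : ℝ → ℝ) (β : ℝ → X)
    (a b : ℝ) : Prop :=
  a < b ∧ ACOn rdist α a b ∧ (∀ s ∈ I, ACOn (d s) β a b) ∧ ∀ t ∈ Set.Icc a b, α t ∈ I

/-- Future directed: `α' > 0` a.e. -/
def FutureDirected (α : ℝ → ℝ) (a b : ℝ) : Prop :=
  ∀ᵐ t : ℝ, t ∈ Set.Ioo a b → 0 < deriv α t

/-- Past directed: `α' < 0` a.e. -/
def PastDirected (α : ℝ → ℝ) (a b : ℝ) : Prop :=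
  ∀ᵐ t : ℝ, t ∈ Set.Ioo a b → deriv α t < 0

/-- The causality inequality `v_β(α_t,t)² ≤ h(γ_t)² α'(t)²` a.e. -/
def CausalIneq {X : Type*} (d : ℝ → X → X → ℝ) (h : ℝ → X → ℝ) (α : ℝ → ℝ)
    (β : ℝ → X) (a b : ℝ) : Prop :=
  ∀ᵐ t : ℝ, t ∈ Set.Ioo a b →
    (genSpeed d β (α t) t) ^ 2 ≤ (h (α t) (β t)) ^ 2 * (deriv α t) ^ 2

/-- The timelike inequality `v_β(α_t,t)² < h(γ_t)² α'(t)²` a.e. -/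
def TimelikeIneq {X : Type*} (d : ℝ → X → X → ℝ) (h : ℝ → X → ℝ) (α : ℝ → ℝ)
    (β : ℝ → X) (a b : ℝ) : Prop :=
  ∀ᵐ t : ℝ, t ∈ Set.Ioo a b →
    (genSpeed d β (α t) t) ^ 2 < (h (α t) (β t)) ^ 2 * (deriv α t) ^ 2

/-- Future directed causal curve. -/
def FutureCausal {X : Type*} (I : Set ℝ) (d : ℝ → X → X → ℝ) (h : ℝ → X → ℝ)
    (α : ℝ → ℝ) (β : ℝ → X) (a b : ℝ) : Prop :=
  CurveIn I d α β a b ∧ FutureDirected α a b ∧ CausalIneq d h α β a b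

/-- Future directed timelike curve. -/
def FutureTimelike {X : Type*} (I : Set ℝ) (d : ℝ → X → X → ℝ) (h : ℝ → X → ℝ)
    (α : ℝ → ℝ) (β : ℝ → X) (a b : ℝ) : Prop :=
  CurveIn I d α β a b ∧ FutureDirected α a b ∧ TimelikeIneq d h α β a b

/-- Causal curve (future or past directed). -/
def CausalCurve {X : Type*} (I : Set ℝ) (d : ℝ → X → X → ℝ) (h : ℝ → X → ℝ)
    (α : ℝ → ℝ) (β : ℝ → X) (a b : ℝ) : Prop :=
  CurveIn I d α β a b ∧ (FutureDirected α a b ∨ PastDirected α a b) ∧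
    CausalIneq d h α β a b

/-- The causal relation `p ≤ q` in the generalized Lorentzian product. -/
def causalRel {X : Type*} (I : Set ℝ) (d : ℝ → X → X → ℝ) (h : ℝ → X → ℝ)
    (p q : ℝ × X) : Prop :=
  ∃ a b α β, FutureCausal I d h α β a b ∧
    α a = p.1 ∧ β a = p.2 ∧ α b = q.1 ∧ β b = q.2

/-- The chronological relation `p ≪ q` in the generalized Lorentzian product. -/
def chronRel {X : Type*} (I : Set ℝ) (d : ℝ → X → X → ℝ) (h : ℝ → X → ℝ)
    (p q : ℝ × X) : Prop :=
  ∃ a b α β, FutureTimelike I d h α β a b ∧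
    α a = p.1 ∧ β a = p.2 ∧ α b = q.1 ∧ β b = q.2

/-- The Lorentzian length of a curve. -/
def lorLen {X : Type*} (d : ℝ → X → X → ℝ) (h : ℝ → X → ℝ) (α : ℝ → ℝ) (β : ℝ → X)
    (a b : ℝ) : ℝ :=
  ∫ t in a..b,
    Real.sqrt ((h (α t) (β t)) ^ 2 * (deriv α t) ^ 2 - (genSpeed d β (α t) t) ^ 2)

/-- The time separation function `τ` of the generalized Lorentzian product. -/
def timeSep {X : Type*} (I : Set ℝ) (d : ℝ → X → X → ℝ) (h : ℝ → X → ℝ)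
    (p q : ℝ × X) : ℝ≥0∞ :=
  sSup {l | ∃ a b α β, FutureCausal I d h α β a b ∧
    α a = p.1 ∧ β a = p.2 ∧ α b = q.1 ∧ β b = q.2 ∧
    l = ENNReal.ofReal (lorLen d h α β a b)}

end

open Filter MeasureTheory Set Topology
open scoped ENNReal

section Limsup

theorem limsup_nonneg_of_eventually_nonneg {f : ℝ → ℝ}
    (hf : ∀ᶠ e in 𝓝[≠] (0 : ℝ), 0 ≤ f e) : 0 ≤ limsup f (𝓝[≠] (0 : ℝ)) := by
  rw [limsup_eq]
  refine Real.sInf_nonneg fun a ha => ?_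
  obtain ⟨e, he, he'⟩ := (hf.and ha).exists
  exact he.trans he'

theorem limsup_le_of_eventually_nonneg_le {f : ℝ → ℝ} {a : ℝ}
    (hf : ∀ᶠ e in 𝓝[≠] (0 : ℝ), 0 ≤ f e) (hfa : ∀ᶠ e in 𝓝[≠] (0 : ℝ), f e ≤ a) :
    limsup f (𝓝[≠] (0 : ℝ)) ≤ a := by
  rw [limsup_eq]
  refine csInf_le ⟨0, fun x hx => ?_⟩ hfa
  obtain ⟨e, he, he'⟩ := (hf.and hx).exists
  exact he.trans he'

/-- The two-sided comparison is needed because the limsup of an unbounded function is `0`. -/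
theorem limsup_le_mul_limsup {f g : ℝ → ℝ} {c : ℝ} (hc : 0 < c)
    (hf : ∀ᶠ e in 𝓝[≠] (0 : ℝ), 0 ≤ f e)
    (hfg : ∀ᶠ e in 𝓝[≠] (0 : ℝ), f e ≤ c * g e)
    (hgf : ∀ᶠ e in 𝓝[≠] (0 : ℝ), g e ≤ c * f e) :
    limsup f (𝓝[≠] (0 : ℝ)) ≤ c * limsup g (𝓝[≠] (0 : ℝ)) := by
  by_cases hb : ∃ a, ∀ᶠ e in 𝓝[≠] (0 : ℝ), g e ≤ a
  · rw [← div_le_iff₀' hc, limsup_eq (u := g)]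
    refine le_csInf hb fun a ha => ?_
    rw [div_le_iff₀' hc]
    refine limsup_le_of_eventually_nonneg_le hf ?_
    filter_upwards [hfg, ha] with e h1 h2
    exact h1.trans (mul_le_mul_of_nonneg_left h2 hc.le)
  · have h1 : {a | ∀ᶠ e in 𝓝[≠] (0 : ℝ), g e ≤ a} = ∅ := by
      ext a
      simpa using fun ha => hb ⟨a, ha⟩
    have h2 : {a | ∀ᶠ e in 𝓝[≠] (0 : ℝ), f e ≤ a} = ∅ := by
      ext a
      simp only [mem_ofPred_eq, mem_empty_iff_false, iff_false]
      intro ha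
      refine hb ⟨c * a, ?_⟩
      filter_upwards [hgf, ha] with e h1 h2
      exact h1.trans (mul_le_mul_of_nonneg_left h2 hc.le)
    rw [limsup_eq, limsup_eq, h1, h2, Real.sInf_empty, mul_zero]

theorem eventually_punctured_nhds_zero_iff {P : ℝ → Prop} :
    (∀ᶠ e in 𝓝[≠] (0 : ℝ), P e) ↔
      ∃ n : ℕ, ∀ e : ℝ, e ≠ 0 → |e| < 1 / ((n : ℝ) + 1) → P e := by
  rw [eventually_nhdsWithin_iff, Metric.eventually_nhds_iff]
  constructor
  · rintro ⟨ε, hε, h⟩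
    obtain ⟨n, hn⟩ := exists_nat_one_div_lt hε
    exact ⟨n, fun e he hen => h (by simpa using hen.trans hn) he⟩
  · rintro ⟨n, h⟩
    exact ⟨1 / ((n : ℝ) + 1), by positivity, fun e he hne => h e hne (by simpa using he)⟩

theorem measurable_limsup_punctured_nhds {F : ℝ → ℝ → ℝ} (hF : ∀ e, Continuous (F e))
    (h0 : ∀ e t, 0 ≤ F e t) : Measurable fun t => limsup (fun e => F e t) (𝓝[≠] (0 : ℝ)) := by
  set A : ℕ → ℚ → Set ℝ :=
    fun n q => {t | ∀ e : ℝ, e ≠ 0 → |e| < 1 / ((n : ℝ) + 1) → F e t ≤ q} with hA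
  have hAm : ∀ n q, MeasurableSet (A n q) := by
    intro n q
    refine IsClosed.measurableSet ?_
    simp only [hA, ofPred_forall]
    exact isClosed_iInter fun e => isClosed_iInter fun _ => isClosed_iInter fun _ =>
      isClosed_le (hF e) continuous_const
  have hbdd : ∀ t, BddBelow {a | ∀ᶠ e in 𝓝[≠] (0 : ℝ), F e t ≤ a} := by
    refine fun t => ⟨0, fun a ha => ?_⟩
    obtain ⟨e, he⟩ := Eventually.exists (f := 𝓝[≠] (0 : ℝ)) (p := fun e => F e t ≤ a) ha
    exact (h0 e t).trans he
  set U : Set ℝ := ⋃ n, ⋃ q, A n q with hU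
  have hUm : MeasurableSet U := MeasurableSet.iUnion fun n => MeasurableSet.iUnion fun q => hAm n q
  refine measurable_of_Iio fun c => ?_
  have key : (fun t => limsup (fun e => F e t) (𝓝[≠] (0 : ℝ))) ⁻¹' Iio c =
      (⋃ n, ⋃ q : ℚ, ⋃ _ : (q : ℝ) < c, A n q) ∪ (Uᶜ ∩ {_t | 0 < c}) := by
    ext t
    simp only [mem_preimage, mem_Iio, mem_union, mem_iUnion, mem_inter_iff, mem_compl_iff,
      mem_ofPred_eq, hU, limsup_eq, exists_prop]
    constructor
    · intro h
      by_cases ht : ∃ n, ∃ q, t ∈ A n q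
      · left
        obtain ⟨n, q, hnq⟩ := ht
        obtain ⟨a, ha, hac⟩ := exists_lt_of_csInf_lt
          ⟨(q : ℝ), eventually_punctured_nhds_zero_iff.2 ⟨n, hnq⟩⟩ h
        obtain ⟨q', h1, h2⟩ := exists_rat_btwn hac
        obtain ⟨n', hn'⟩ := eventually_punctured_nhds_zero_iff.1 ha
        exact ⟨n', q', h2, fun e he hen => (hn' e he hen).trans h1.le⟩
      · right
        refine ⟨ht, ?_⟩
        have : {a | ∀ᶠ e in 𝓝[≠] (0 : ℝ), F e t ≤ a} = ∅ := by
          ext a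
          simp only [mem_ofPred_eq, mem_empty_iff_false, iff_false]
          intro ha
          obtain ⟨q', h1⟩ := exists_rat_gt a
          obtain ⟨n', hn'⟩ := eventually_punctured_nhds_zero_iff.1 ha
          exact ht ⟨n', q', fun e he hen => (hn' e he hen).trans h1.le⟩
        rwa [this, Real.sInf_empty] at h
    · rintro (⟨n, q, hq, hnq⟩ | ⟨ht, hc⟩)
      · exact (csInf_le (hbdd t) (eventually_punctured_nhds_zero_iff.2 ⟨n, hnq⟩)).trans_lt hq
      · have : {a | ∀ᶠ e in 𝓝[≠] (0 : ℝ), F e t ≤ a} = ∅ := by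
          ext a
          simp only [mem_ofPred_eq, mem_empty_iff_false, iff_false]
          intro ha
          obtain ⟨q', h1⟩ := exists_rat_gt a
          obtain ⟨n', hn'⟩ := eventually_punctured_nhds_zero_iff.1 ha
          exact ht ⟨n', q', fun e he hen => (hn' e he hen).trans h1.le⟩
        rwa [this, Real.sInf_empty]
  rw [key]
  refine MeasurableSet.union ?_ (hUm.compl.inter (MeasurableSet.const _))
  exact MeasurableSet.iUnion fun n => MeasurableSet.iUnion fun q =>
    MeasurableSet.iUnion fun _ => hAm n q

end Limsup

section Local

variable {X : Type*}

theorem mSpeed_congr {dst : X → X → ℝ} {β β' : ℝ → X} {t : ℝ} (h : β =ᶠ[𝓝 t] β') :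
    mSpeed dst β t = mSpeed dst β' t := by
  have h1 : Tendsto (fun e : ℝ => t + e) (𝓝[≠] 0) (𝓝 t) := by
    have : Tendsto (fun e : ℝ => t + e) (𝓝 0) (𝓝 (t + 0)) :=
      (continuous_const.add continuous_id).tendsto 0
    rw [add_zero] at this
    exact this.mono_left nhdsWithin_le_nhds
  refine limsup_congr ?_
  filter_upwards [h1.eventually h] with e he
  rw [he, h.eq_of_nhds]

/-- Eventually for small `e`, the interval between `t` and `t + e` lies in a given
neighbourhood of `t`. -/
theorem eventually_uIcc_add_subset {t : ℝ} {P : ℝ → Prop} (h : ∀ᶠ u in 𝓝 t, P u) :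
    ∀ᶠ e in 𝓝[≠] (0 : ℝ), ∀ u ∈ uIcc t (t + e), P u := by
  obtain ⟨ε, hε, H⟩ := Metric.eventually_nhds_iff.1 h
  refine nhdsWithin_le_nhds ?_
  filter_upwards [Metric.ball_mem_nhds (0 : ℝ) hε] with e he u hu
  refine H ?_
  have h1 := abs_sub_left_of_mem_uIcc hu
  rw [Real.dist_eq]
  refine h1.trans_lt ?_
  simpa using he

theorem genSpeed_congr {d : ℝ → X → X → ℝ} {β β' : ℝ → X} {s t : ℝ} (h : β =ᶠ[𝓝 t] β') :
    genSpeed d β s t = genSpeed d β' s t := by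
  refine limsup_congr ?_
  filter_upwards [eventually_uIcc_add_subset h.eventually_nhds] with e he
  congr 1
  exact intervalIntegral.integral_congr fun u hu => mSpeed_congr (he u hu)

theorem mSpeed_nonneg {dst : X → X → ℝ} (h0 : ∀ x y, 0 ≤ dst x y) (β : ℝ → X) (t : ℝ) :
    0 ≤ mSpeed dst β t :=
  limsup_nonneg_of_eventually_nonneg (.of_forall fun _ => div_nonneg (h0 _ _) (abs_nonneg _))

theorem integral_div_nonneg {f : ℝ → ℝ} (hf : ∀ u, 0 ≤ f u) (t e : ℝ) :
    0 ≤ (∫ u in t..(t + e), f u) / e := by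
  rcases le_total 0 e with he | he
  · exact div_nonneg (intervalIntegral.integral_nonneg (by linarith) fun u _ => hf u) he
  · rw [intervalIntegral.integral_symm]
    exact div_nonneg_of_nonpos (neg_nonpos.2 <|
      intervalIntegral.integral_nonneg (by linarith) fun u _ => hf u) he

theorem genSpeed_nonneg {d : ℝ → X → X → ℝ} {s : ℝ} (h0 : ∀ x y, 0 ≤ d s x y) (β : ℝ → X)
    (t : ℝ) : 0 ≤ genSpeed d β s t :=
  limsup_nonneg_of_eventually_nonneg
    (.of_forall fun e => integral_div_nonneg (mSpeed_nonneg h0 β) t e)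

theorem mSpeed_comp_add_right (dst : X → X → ℝ) (β : ℝ → X) (k t : ℝ) :
    mSpeed dst (fun u => β (u + k)) t = mSpeed dst β (t + k) := by
  simp only [mSpeed, add_right_comm]

theorem genSpeed_comp_add_right (d : ℝ → X → X → ℝ) (β : ℝ → X) (s k t : ℝ) :
    genSpeed d (fun u => β (u + k)) s t = genSpeed d β s (t + k) := by
  simp only [genSpeed, mSpeed_comp_add_right]
  refine congrArg (fun f => limsup f (𝓝[≠] (0 : ℝ))) (funext fun e => ?_)
  rw [intervalIntegral.integral_comp_add_right (fun u => mSpeed (d s) β u), add_right_comm]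

/-- The generalized speed, computed from the metric speed set to zero outside `(a,b)`. -/
noncomputable def cutSpeed (d : ℝ → X → X → ℝ) (β : ℝ → X) (a b s t : ℝ) : ℝ :=
  limsup (fun e : ℝ => (∫ u in t..(t + e), (Ioo a b).indicator (mSpeed (d s) β) u) / e)
    (𝓝[≠] (0 : ℝ))

theorem cutSpeed_eq_genSpeed {d : ℝ → X → X → ℝ} {β : ℝ → X} {a b t : ℝ} (s : ℝ) (ht : t ∈ Ioo a b) :
    cutSpeed d β a b s t = genSpeed d β s t := by
  refine limsup_congr ?_
  filter_upwards [eventually_uIcc_add_subset (Ioo_mem_nhds ht.1 ht.2)] with e he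
  congr 1
  exact intervalIntegral.integral_congr fun u hu => indicator_of_mem (s := Ioo a b) (he u hu) _

end Local

section Concatenation

variable {X : Type*} {I : Set ℝ} {d : ℝ → X → X → ℝ} {h : ℝ → X → ℝ}

theorem ACOn.comp_add_right {Y : Type*} {dst : Y → Y → ℝ} {β : ℝ → Y} {a b : ℝ}
    (hβ : ACOn dst β a b) (k : ℝ) : ACOn dst (fun t => β (t + k)) (a - k) (b - k) := by
  obtain ⟨g, hg, H⟩ := hβ
  refine ⟨fun t => g (t + k), ?_, fun t u ht hu htu => ?_⟩
  · have := (measurePreserving_add_right volume k).integrableOn_comp_preimage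
      (measurableEmbedding_addRight k) (f := g) (s := Icc a b)
    rw [preimage_add_const_Icc] at this
    exact this.2 hg
  · rw [intervalIntegral.integral_comp_add_right]
    exact H ⟨by linarith [ht.1], by linarith [ht.2]⟩ ⟨by linarith [hu.1], by linarith [hu.2]⟩
      (by linarith)

theorem ae_comp_add_right {P : ℝ → Prop} (hP : ∀ᵐ t : ℝ, P t) (k : ℝ) : ∀ᵐ t : ℝ, P (t + k) :=
  (measurePreserving_add_right volume k).quasiMeasurePreserving.ae hP

theorem FutureTimelike.comp_add_right {α : ℝ → ℝ} {β : ℝ → X} {a b : ℝ}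
    (H : FutureTimelike I d h α β a b) (k : ℝ) :
    FutureTimelike I d h (fun t => α (t + k)) (fun t => β (t + k)) (a - k) (b - k) := by
  obtain ⟨⟨hab, hα, hβ, hI⟩, hfd, htl⟩ := H
  refine ⟨⟨by linarith, hα.comp_add_right k, fun s hs => (hβ s hs).comp_add_right k,
    fun t ht => hI _ ⟨by linarith [ht.1], by linarith [ht.2]⟩⟩, ?_, ?_⟩
  · filter_upwards [ae_comp_add_right hfd k] with t ht hmem
    rw [deriv_comp_add_const]
    exact ht ⟨by linarith [hmem.1], by linarith [hmem.2]⟩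
  · filter_upwards [ae_comp_add_right htl k] with t ht hmem
    rw [deriv_comp_add_const, genSpeed_comp_add_right]
    exact ht ⟨by linarith [hmem.1], by linarith [hmem.2]⟩

theorem ACOn.concat {Y : Type*} {dst : Y → Y → ℝ} (htri : ∀ x y z, dst x z ≤ dst x y + dst y z)
    {β₁ β₂ : ℝ → Y} {a m b : ℝ} (h₁ : ACOn dst β₁ a m) (h₂ : ACOn dst β₂ m b)
    (ham : a ≤ m) (hmb : m ≤ b) (hm : β₁ m = β₂ m) :
    ACOn dst (fun t => if t ≤ m then β₁ t else β₂ t) a b := by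
  obtain ⟨g₁, hg₁, H₁⟩ := h₁
  obtain ⟨g₂, hg₂, H₂⟩ := h₂
  set g : ℝ → ℝ := fun t => if t ≤ m then g₁ t else g₂ t with hg
  have e₁ : ∀ t u, t ≤ u → u ≤ m → ∫ r in t..u, g r = ∫ r in t..u, g₁ r := by
    intro t u htu hu
    refine intervalIntegral.integral_congr fun r hr => ?_
    rw [uIcc_of_le htu] at hr
    simp [hg, hr.2.trans hu]
  have e₂ : ∀ t u, t ≤ u → m ≤ t → ∫ r in t..u, g r = ∫ r in t..u, g₂ r := by
    intro t u htu ht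
    refine intervalIntegral.integral_congr_ae (.of_forall fun r hr => ?_)
    rw [uIoc_of_le htu] at hr
    simp [hg, not_le.2 (ht.trans_lt hr.1)]
  have i₁ : IntegrableOn g (Icc a m) :=
    hg₁.congr_fun (fun r hr => by simp [hg, hr.2]) measurableSet_Icc
  have i₂ : IntegrableOn g (Ioc m b) :=
    (hg₂.mono_set Ioc_subset_Icc_self).congr_fun
      (fun r hr => by simp [hg, not_le.2 hr.1]) measurableSet_Ioc
  refine ⟨g, (i₁.union i₂).mono_set fun t ht => ?_, fun t u ht hu htu => ?_⟩
  · rcases le_or_gt t m with h | h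
    · exact Or.inl ⟨ht.1, h⟩
    · exact Or.inr ⟨h, ht.2⟩
  · rcases le_or_gt u m with hum | hum
    · rw [e₁ t u htu hum]
      simpa [hum, htu.trans hum] using H₁ ⟨ht.1, htu.trans hum⟩ ⟨hu.1, hum⟩ htu
    rcases lt_or_ge m t with hmt | htm
    · rw [e₂ t u htu hmt.le]
      simpa [not_le.2 hum, not_le.2 hmt] using H₂ ⟨hmt.le, ht.2⟩ ⟨hum.le, hu.2⟩ htu
    have i₁' : IntervalIntegrable g volume t m :=
      (intervalIntegrable_iff_integrableOn_Ioc_of_le htm).2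
        (i₁.mono_set fun r hr => ⟨ht.1.trans hr.1.le, hr.2⟩)
    have i₂' : IntervalIntegrable g volume m u :=
      (intervalIntegrable_iff_integrableOn_Ioc_of_le hum.le).2
        (i₂.mono_set fun r hr => ⟨hr.1, hr.2.trans hu.2⟩)
    rw [← intervalIntegral.integral_add_adjacent_intervals i₁' i₂', e₁ t m htm le_rfl,
      e₂ m u hum.le le_rfl]
    simp only [htm, not_le.2 hum, if_true, if_false]
    refine (htri _ (β₁ m) _).trans (add_le_add (H₁ ⟨ht.1, htm⟩ ⟨ham, le_rfl⟩ htm) ?_)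
    rw [hm]
    exact H₂ ⟨le_rfl, hmb⟩ ⟨hum.le, hu.2⟩ hum.le

theorem ite_le_eventuallyEq_left {Y : Type*} (f₁ f₂ : ℝ → Y) {m t : ℝ} (ht : t < m) :
    (fun t => if t ≤ m then f₁ t else f₂ t) =ᶠ[𝓝 t] f₁ := by
  filter_upwards [eventually_lt_nhds ht] with u hu
  simp [hu.le]

theorem ite_le_eventuallyEq_right {Y : Type*} (f₁ f₂ : ℝ → Y) {m t : ℝ} (ht : m < t) :
    (fun t => if t ≤ m then f₁ t else f₂ t) =ᶠ[𝓝 t] f₂ := by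
  filter_upwards [eventually_gt_nhds ht] with u hu
  simp [not_le.2 hu]

theorem FutureTimelike.concat (htri : ∀ s ∈ I, ∀ x y z, d s x z ≤ d s x y + d s y z)
    {α₁ α₂ : ℝ → ℝ} {β₁ β₂ : ℝ → X} {a m b : ℝ}
    (H₁ : FutureTimelike I d h α₁ β₁ a m) (H₂ : FutureTimelike I d h α₂ β₂ m b)
    (hα : α₁ m = α₂ m) (hβ : β₁ m = β₂ m) :
    FutureTimelike I d h (fun t => if t ≤ m then α₁ t else α₂ t)
      (fun t => if t ≤ m then β₁ t else β₂ t) a b := by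
  obtain ⟨⟨hab₁, hα₁, hβ₁, hI₁⟩, hfd₁, htl₁⟩ := H₁
  obtain ⟨⟨hab₂, hα₂, hβ₂, hI₂⟩, hfd₂, htl₂⟩ := H₂
  have hm : ∀ᵐ t : ℝ, t ≠ m := by simp [ae_iff, measure_singleton]
  refine ⟨⟨hab₁.trans hab₂,
    hα₁.concat (fun x y z => abs_sub_le x y z) hα₂ hab₁.le hab₂.le hα,
    fun s hs => (hβ₁ s hs).concat (htri s hs) (hβ₂ s hs) hab₁.le hab₂.le hβ, fun t ht => ?_⟩,
    ?_, ?_⟩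
  · rcases le_or_gt t m with h | h
    · simpa [h] using hI₁ t ⟨ht.1, h⟩
    · simpa [not_le.2 h] using hI₂ t ⟨h.le, ht.2⟩
  · filter_upwards [hfd₁, hfd₂, hm] with t h₁ h₂ htm hmem
    rcases lt_or_gt_of_ne htm with h | h
    · rw [(ite_le_eventuallyEq_left α₁ α₂ h).deriv_eq]
      exact h₁ ⟨hmem.1, h⟩
    · rw [(ite_le_eventuallyEq_right α₁ α₂ h).deriv_eq]
      exact h₂ ⟨h, hmem.2⟩
  · filter_upwards [htl₁, htl₂, hm] with t h₁ h₂ htm hmem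
    rcases lt_or_gt_of_ne htm with h | h
    · rw [(ite_le_eventuallyEq_left α₁ α₂ h).deriv_eq, genSpeed_congr (ite_le_eventuallyEq_left β₁ β₂ h)]
      simpa [h.le] using h₁ ⟨hmem.1, h⟩
    · rw [(ite_le_eventuallyEq_right α₁ α₂ h).deriv_eq, genSpeed_congr (ite_le_eventuallyEq_right β₁ β₂ h)]
      simpa [not_le.2 h] using h₂ ⟨h, hmem.2⟩

theorem FutureTimelike.futureCausal {α : ℝ → ℝ} {β : ℝ → X} {a b : ℝ}
    (hγ : FutureTimelike I d h α β a b) : FutureCausal I d h α β a b :=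
  ⟨hγ.1, hγ.2.1, hγ.2.2.mono fun _ ht hmem => (ht hmem).le⟩

theorem chronRel.trans (htri : ∀ s ∈ I, ∀ x y z, d s x z ≤ d s x y + d s y z)
    {p q r : ℝ × X} (hpq : chronRel I d h p q) (hqr : chronRel I d h q r) :
    chronRel I d h p r := by
  obtain ⟨a, m, α₁, β₁, H₁, hα₁, hβ₁, hα₁', hβ₁'⟩ := hpq
  obtain ⟨m', b, α₂, β₂, H₂, hα₂, hβ₂, hα₂', hβ₂'⟩ := hqr
  have H₂' := H₂.comp_add_right (m' - m)
  rw [sub_sub_cancel] at H₂'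
  have h₁ := H₁.1.1
  have h₂ := H₂'.1.1
  refine ⟨a, _, _, _, H₁.concat htri H₂' ?_ ?_, ?_⟩
  · simp [hα₁', hα₂]
  · simp [hβ₁', hβ₂]
  · simp [h₁.le, not_le.2 h₂, hα₁, hβ₁, hα₂', hβ₂']

end Concatenation

section Speed

variable {X : Type*} [TopologicalSpace X] {I : Set ℝ} {d : ℝ → X → X → ℝ}

theorem IsMetricFamily.nonneg (hd : IsMetricFamily I d) {s : ℝ} (hs : s ∈ I) (x y : X) :
    0 ≤ d s x y := by
  obtain ⟨h0, hpos, -⟩ := hd s hs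
  by_cases hxy : x = y
  · rw [hxy, h0]
  · exact (hpos x y hxy).le

theorem IsMetricFamily.continuous (hd : IsMetricFamily I d) {s : ℝ} (hs : s ∈ I) :
    Continuous fun z : X × X => d s z.1 z.2 := by
  obtain ⟨-, -, hsymm, htri, hbasis⟩ := hd s hs
  rw [continuous_iff_continuousAt]
  rintro ⟨x, y⟩
  rw [ContinuousAt, Metric.tendsto_nhds]
  intro ε hε
  have h1 := (hbasis x).mem_of_mem (half_pos hε)
  have h2 := (hbasis y).mem_of_mem (half_pos hε)
  filter_upwards [prod_mem_nhds h1 h2] with z hz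
  have hz1 : d s x z.1 < ε / 2 := hz.1
  have hz2 : d s y z.2 < ε / 2 := hz.2
  rw [Real.dist_eq, abs_lt]
  constructor
  · linarith [htri x z.1 y, htri z.1 z.2 y, hsymm y z.2]
  · linarith [htri z.1 x z.2, htri x y z.2, hsymm x z.1]

theorem ACOn.exists_integrable {Y : Type*} {dst : Y → Y → ℝ} {β : ℝ → Y} {a b : ℝ}
    (hsymm : ∀ x y, dst x y = dst y x) (hβ : ACOn dst β a b) :
    ∃ g : ℝ → ℝ, Integrable g ∧ ∀ t ∈ Icc a b, ∀ u ∈ Icc a b,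
      dst (β t) (β u) ≤ |∫ r in t..u, g r| := by
  obtain ⟨g, hg, H⟩ := hβ
  have key : ∀ t ∈ Icc a b, ∀ u ∈ Icc a b, t ≤ u →
      dst (β t) (β u) ≤ |∫ r in t..u, (Icc a b).indicator g r| := by
    intro t ht u hu htu
    refine (H ht hu htu).trans ((le_abs_self _).trans (le_of_eq ?_))
    congr 1
    refine intervalIntegral.integral_congr fun r hr => ?_
    rw [uIcc_of_le htu] at hr
    exact (indicator_of_mem (s := Icc a b) ⟨ht.1.trans hr.1, hr.2.trans hu.2⟩ g).symm
  refine ⟨(Icc a b).indicator g, hg.integrable_indicator measurableSet_Icc, fun t ht u hu => ?_⟩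
  rcases le_total t u with htu | htu
  · exact key t ht u hu htu
  · rw [hsymm, intervalIntegral.integral_symm, abs_neg]
    exact key u hu t ht htu

theorem continuous_integral_add {g : ℝ → ℝ} (hg : Integrable g) (e : ℝ) :
    Continuous fun t => ∫ r in t..(t + e), g r := by
  have h := hg.continuous_primitive 0
  have : (fun t => ∫ r in t..(t + e), g r) =
      fun t => (∫ r in (0 : ℝ)..(t + e), g r) - ∫ r in (0 : ℝ)..t, g r := by
    ext t
    exact (intervalIntegral.integral_interval_sub_left hg.intervalIntegrable
      hg.intervalIntegrable).symm
  rw [this]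
  exact (h.comp (continuous_id.add continuous_const)).sub h

theorem tendsto_integral_nhds {g : ℝ → ℝ} (hg : Integrable g) (t : ℝ) :
    Tendsto (fun u => |∫ r in t..u, g r|) (𝓝 t) (𝓝 0) := by
  have := ((hg.continuous_primitive t).abs).tendsto t
  simpa using this

theorem ACOn.continuousOn (hd : IsMetricFamily I d) {s : ℝ} (hs : s ∈ I) {β : ℝ → X}
    {a b : ℝ} (hβ : ACOn (d s) β a b) : ContinuousOn β (Icc a b) := by
  obtain ⟨-, -, hsymm, -, hbasis⟩ := hd s hs
  obtain ⟨g, hg, H⟩ := hβ.exists_integrable hsymm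
  intro t ht
  rw [ContinuousWithinAt, (hbasis (β t)).tendsto_right_iff]
  intro ε hε
  filter_upwards [nhdsWithin_le_nhds ((tendsto_integral_nhds hg t).eventually_lt_const hε),
    self_mem_nhdsWithin] with u hu hmem
  exact (H t ht u hmem).trans_lt hu

theorem ACOn.continuousOn_real {α : ℝ → ℝ} {a b : ℝ} (hα : ACOn rdist α a b) :
    ContinuousOn α (Icc a b) := by
  obtain ⟨g, hg, H⟩ := hα.exists_integrable fun x y => abs_sub_comm x y
  intro t ht
  rw [ContinuousWithinAt, Metric.tendsto_nhds]
  intro ε hε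
  filter_upwards [nhdsWithin_le_nhds ((tendsto_integral_nhds hg t).eventually_lt_const hε),
    self_mem_nhdsWithin] with u hu hmem
  rw [Real.dist_eq, abs_sub_comm]
  exact (H t ht u hmem).trans_lt hu

/-- A function on `[a,b]` extended to the line by its boundary values. -/
def clampTo {Y : Type*} (a b : ℝ) (f : ℝ → Y) : ℝ → Y := fun t => f (max a (min b t))

theorem clampTo_of_mem {Y : Type*} {a b t : ℝ} (f : ℝ → Y) (ht : t ∈ Icc a b) :
    clampTo a b f t = f t := by
  rw [clampTo, min_eq_right ht.2, max_eq_right ht.1]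

theorem max_min_mem_Icc {a b : ℝ} (hab : a ≤ b) (t : ℝ) : max a (min b t) ∈ Icc a b :=
  ⟨le_max_left _ _, max_le hab (min_le_left _ _)⟩

theorem continuous_clampTo {Y : Type*} [TopologicalSpace Y] {a b : ℝ} (hab : a ≤ b) {f : ℝ → Y}
    (hf : ContinuousOn f (Icc a b)) : Continuous (clampTo a b f) :=
  hf.comp_continuous (continuous_const.max (continuous_const.min continuous_id))
    (max_min_mem_Icc hab)

theorem integrable_indicator_mSpeed (hd : IsMetricFamily I d) {s : ℝ} (hs : s ∈ I) {β : ℝ → X}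
    {a b : ℝ} (hab : a ≤ b) (hβ : ACOn (d s) β a b) :
    Integrable ((Ioo a b).indicator (mSpeed (d s) β)) := by
  have hsymm := (hd s hs).2.2.1
  obtain ⟨g, hg, H⟩ := hβ.exists_integrable hsymm
  have hcont := continuous_clampTo hab (hβ.continuousOn hd hs)
  have heq : (Ioo a b).indicator (mSpeed (d s) β) =
      (Ioo a b).indicator (mSpeed (d s) (clampTo a b β)) := by
    refine indicator_congr fun t ht => mSpeed_congr ?_
    filter_upwards [Ioo_mem_nhds ht.1 ht.2] with u hu
    exact (clampTo_of_mem β (Ioo_subset_Icc_self hu)).symm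
  have hmeas : Measurable ((Ioo a b).indicator (mSpeed (d s) β)) := by
    rw [heq]
    refine Measurable.indicator ?_ measurableSet_Ioo
    refine measurable_limsup_punctured_nhds
      (F := fun e t => d s (clampTo a b β (t + e)) (clampTo a b β t) / |e|) (fun e => ?_)
      fun e t => div_nonneg (hd.nonneg hs _ _) (abs_nonneg _)
    exact ((hd.continuous hs).comp
      ((hcont.comp (continuous_id.add continuous_const)).prodMk hcont)).div_const _
  have hbound : Integrable ((Ioo a b).indicator fun t => |g t| + 1) :=
    IntegrableOn.integrable_indicator
      (hg.abs.integrableOn.add (integrableOn_const (by simp))) measurableSet_Ioo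
  refine hbound.mono' hmeas.aestronglyMeasurable ?_
  filter_upwards [LocallyIntegrable.ae_hasDerivAt_integral hg.locallyIntegrable] with t ht
  by_cases hmem : t ∈ Ioo a b
  · rw [indicator_of_mem hmem, indicator_of_mem hmem, Real.norm_of_nonneg
      (mSpeed_nonneg (hd.nonneg hs) _ _)]
    refine limsup_le_of_eventually_nonneg_le
      (.of_forall fun e => div_nonneg (hd.nonneg hs _ _) (abs_nonneg _)) ?_
    have h1 := (hasDerivAt_iff_tendsto_slope_zero.1 (ht t)).abs
    have h2 := eventually_uIcc_add_subset (t := t) (P := fun u => u ∈ Icc a b)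
      (Icc_mem_nhds hmem.1 hmem.2)
    filter_upwards [h1.eventually_lt_const (lt_add_one |g t|), h2] with e he he2
    refine le_trans ?_ he.le
    rw [intervalIntegral.integral_same, sub_zero, smul_eq_mul, abs_mul, abs_inv, div_eq_inv_mul,
      hsymm]
    exact mul_le_mul_of_nonneg_left (H t (Ioo_subset_Icc_self hmem) _ (he2 _ right_mem_uIcc))
      (by positivity)
  · simp [hmem]

/-- Near every interior time of the curve, the metrics `d s`, `s ∈ J`, are comparable along it
with logarithmic distortion linear in the parameter. -/
theorem exists_eventually_dist_le (hd : IsMetricFamily I d) (hdL : CondL I d)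
    {β : ℝ → X} {a b : ℝ} (hβ : ∀ s ∈ I, ACOn (d s) β a b) {J : Set ℝ} (hJI : J ⊆ I)
    (hJ : IsCompact J) (hJne : J.Nonempty) :
    ∃ C > 0, ∀ s ∈ J, ∀ s' ∈ J, ∀ t ∈ Ioo a b, ∀ᶠ e in 𝓝[≠] (0 : ℝ),
      d s (β (t + e)) (β t) ≤ Real.exp (C * |s - s'|) * d s' (β (t + e)) (β t) := by
  obtain ⟨s₀, hs₀⟩ := hJne
  have hcont := (hβ s₀ (hJI hs₀)).continuousOn hd (hJI hs₀)
  obtain ⟨C, hC, r, hr, H⟩ := hdL J (β '' Icc a b) hJI hJ (isCompact_Icc.image_of_continuousOn hcont)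
  refine ⟨C, hC, fun s hs s' hs' t ht => ?_⟩
  have h0 : Tendsto (fun e => d s (β (t + e)) (β t)) (𝓝[≠] (0 : ℝ)) (𝓝 0) := by
    have h1 : ContinuousAt β t := hcont.continuousAt (Icc_mem_nhds ht.1 ht.2)
    have h2 : Tendsto (fun e : ℝ => t + e) (𝓝[≠] 0) (𝓝 t) := by
      have : Tendsto (fun e : ℝ => t + e) (𝓝 0) (𝓝 (t + 0)) :=
        (continuous_const.add continuous_id).tendsto 0
      rw [add_zero] at this
      exact this.mono_left nhdsWithin_le_nhds
    have h3 := ((hd.continuous (hJI hs)).tendsto (β t, β t)).comp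
      ((h1.tendsto.comp h2).prodMk_nhds tendsto_const_nhds)
    simpa [(hd s (hJI hs)).1, Function.comp_def] using h3
  have h2 := eventually_uIcc_add_subset (t := t) (P := fun u => u ∈ Icc a b)
      (Icc_mem_nhds ht.1 ht.2)
  filter_upwards [h0.eventually_lt_const hr, h2] with e he he2
  by_cases hxy : β (t + e) = β t
  · rw [hxy, (hd s (hJI hs)).1, (hd s' (hJI hs')).1, mul_zero]
  have hp := (hd s (hJI hs)).2.1 _ _ hxy
  have hp' := (hd s' (hJI hs')).2.1 _ _ hxy
  have hlog := H s hs s' hs' _ ⟨_, he2 _ right_mem_uIcc, rfl⟩ _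
    ⟨t, Ioo_subset_Icc_self ht, rfl⟩ hxy (lt_of_le_of_lt (csInf_le ⟨0, ?_⟩ ⟨s, hs, rfl⟩) he)
  · rw [← div_le_iff₀ hp', ← Real.log_le_iff_le_exp (div_pos hp hp')]
    exact (le_abs_self _).trans hlog
  · rintro _ ⟨u, hu, rfl⟩
    exact hd.nonneg (hJI hu) _ _

theorem indicator_mSpeed_nonneg (hd : IsMetricFamily I d) {s : ℝ} (hs : s ∈ I) (β : ℝ → X)
    (a b u : ℝ) : 0 ≤ (Ioo a b).indicator (mSpeed (d s) β) u :=
  indicator_nonneg (fun _ _ => mSpeed_nonneg (hd.nonneg hs) _ _) u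

theorem measurable_cutSpeed (hd : IsMetricFamily I d) {s : ℝ} (hs : s ∈ I) {β : ℝ → X}
    {a b : ℝ} (hab : a ≤ b) (hβ : ACOn (d s) β a b) : Measurable (cutSpeed d β a b s) :=
  measurable_limsup_punctured_nhds
    (F := fun e t => (∫ u in t..(t + e), (Ioo a b).indicator (mSpeed (d s) β) u) / e)
    (fun e => (continuous_integral_add (integrable_indicator_mSpeed hd hs hab hβ) e).div_const e)
    fun e t => integral_div_nonneg (indicator_mSpeed_nonneg hd hs β a b) t e

theorem integral_div_le_mul {f g : ℝ → ℝ} {c : ℝ} (hf : Integrable f) (hg : Integrable g)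
    (h : ∀ u, f u ≤ c * g u) (t e : ℝ) :
    (∫ u in t..(t + e), f u) / e ≤ c * ((∫ u in t..(t + e), g u) / e) := by
  rw [← mul_div_assoc, ← intervalIntegral.integral_const_mul]
  rcases le_total 0 e with he | he
  · exact div_le_div_of_nonneg_right (intervalIntegral.integral_mono (by linarith)
      hf.intervalIntegrable (hg.const_mul c).intervalIntegrable h) he
  · refine div_le_div_of_nonpos_of_le he ?_
    rw [intervalIntegral.integral_symm, intervalIntegral.integral_symm (f := f)]
    exact neg_le_neg (intervalIntegral.integral_mono (by linarith)
      hf.intervalIntegrable (hg.const_mul c).intervalIntegrable h)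

theorem exists_cutSpeed_le (hd : IsMetricFamily I d) (hdL : CondL I d)
    {β : ℝ → X} {a b : ℝ} (hab : a ≤ b) (hβ : ∀ s ∈ I, ACOn (d s) β a b) {J : Set ℝ}
    (hJI : J ⊆ I) (hJ : IsCompact J) (hJne : J.Nonempty) :
    ∃ C > 0, ∀ s ∈ J, ∀ s' ∈ J, ∀ t,
      cutSpeed d β a b s t ≤ Real.exp (C * |s - s'|) * cutSpeed d β a b s' t := by
  obtain ⟨C, hC, H⟩ := exists_eventually_dist_le hd hdL hβ hJI hJ hJne
  have hm : ∀ s ∈ J, ∀ s' ∈ J, ∀ t, (Ioo a b).indicator (mSpeed (d s) β) t ≤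
      Real.exp (C * |s - s'|) * (Ioo a b).indicator (mSpeed (d s') β) t := by
    intro s hs s' hs' t
    by_cases ht : t ∈ Ioo a b
    · rw [indicator_of_mem ht, indicator_of_mem ht]
      have key : ∀ s ∈ J, ∀ s' ∈ J, ∀ᶠ e in 𝓝[≠] (0 : ℝ), d s (β (t + e)) (β t) / |e| ≤
          Real.exp (C * |s - s'|) * (d s' (β (t + e)) (β t) / |e|) := by
        intro s hs s' hs'
        filter_upwards [H s hs s' hs' t ht] with e he
        rw [← mul_div_assoc]
        exact div_le_div_of_nonneg_right he (abs_nonneg _)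
      refine limsup_le_mul_limsup (Real.exp_pos _)
        (.of_forall fun e => div_nonneg (hd.nonneg (hJI hs) _ _) (abs_nonneg _))
        (key s hs s' hs') ?_
      rw [abs_sub_comm]
      exact key s' hs' s hs
    · simp [ht]
  refine ⟨C, hC, fun s hs s' hs' t => ?_⟩
  have hi := fun s (hs : s ∈ J) =>
    integrable_indicator_mSpeed hd (hJI hs) hab (hβ s (hJI hs))
  refine limsup_le_mul_limsup (Real.exp_pos _)
    (.of_forall fun e => integral_div_nonneg (indicator_mSpeed_nonneg hd (hJI hs) β a b) t e)
    (.of_forall fun e => integral_div_le_mul (hi s hs) (hi s' hs') (hm s hs s' hs') t e) ?_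
  rw [abs_sub_comm]
  exact .of_forall fun e => integral_div_le_mul (hi s' hs') (hi s hs) (hm s' hs' s hs) t e

theorem exists_genSpeed_le (hd : IsMetricFamily I d) (hdL : CondL I d)
    {β : ℝ → X} {a b : ℝ} (hab : a ≤ b) (hβ : ∀ s ∈ I, ACOn (d s) β a b) {J : Set ℝ}
    (hJI : J ⊆ I) (hJ : IsCompact J) (hJne : J.Nonempty) :
    ∃ C > 0, ∀ s ∈ J, ∀ s' ∈ J, ∀ t ∈ Ioo a b,
      genSpeed d β s t ≤ Real.exp (C * |s - s'|) * genSpeed d β s' t := by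
  obtain ⟨C, hC, H⟩ := exists_cutSpeed_le hd hdL hab hβ hJI hJ hJne
  refine ⟨C, hC, fun s hs s' hs' t ht => ?_⟩
  rw [← cutSpeed_eq_genSpeed s ht, ← cutSpeed_eq_genSpeed s' ht]
  exact H s hs s' hs' t

/-- Along a curve, the generalized speed agrees with a measurable function of time. -/
theorem CurveIn.exists_measurable_genSpeed (hd : IsMetricFamily I d) (hdL : CondL I d)
    {α : ℝ → ℝ} {β : ℝ → X} {a b : ℝ} (hγ : CurveIn I d α β a b) :
    ∃ v : ℝ → ℝ, Measurable v ∧ ∀ t ∈ Ioo a b, genSpeed d β (α t) t = v t := by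
  obtain ⟨hab, hα, hβ, hI⟩ := hγ
  have hα' := continuous_clampTo hab.le hα.continuousOn_real
  set J : Set ℝ := α '' Icc a b with hJdef
  have hJ : IsCompact J := isCompact_Icc.image_of_continuousOn hα.continuousOn_real
  have hJI : J ⊆ I := by
    rintro _ ⟨t, ht, rfl⟩
    exact hI t ht
  have hJne : J.Nonempty := ⟨_, a, left_mem_Icc.2 hab.le, rfl⟩
  obtain ⟨C, hC, H⟩ := exists_cutSpeed_le hd hdL hab.le hβ hJI hJ hJne
  have hmem : ∀ t, clampTo a b α t ∈ J := fun t => ⟨_, max_min_mem_Icc hab.le t, rfl⟩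
  have hmeas : Measurable (Function.uncurry fun (s : J) t => cutSpeed d β a b s t) := by
    refine measurable_uncurry_of_continuous_of_measurable (fun t => ?_) fun s =>
      measurable_cutSpeed hd (hJI s.2) hab.le (hβ s (hJI s.2))
    rw [continuous_iff_continuousAt]
    intro s₀
    have hexp : ∀ c : ℝ, Tendsto
        (fun s : J => Real.exp (c * |(s : ℝ) - s₀|) * cutSpeed d β a b s₀ t) (𝓝 s₀)
        (𝓝 (cutSpeed d β a b s₀ t)) := by
      intro c
      have : Continuous fun s : J => Real.exp (c * |(s : ℝ) - s₀|) * cutSpeed d β a b s₀ t := by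
        fun_prop
      simpa using this.tendsto s₀
    refine tendsto_of_tendsto_of_tendsto_of_le_of_le (hexp (-C)) (hexp C) (fun s => ?_)
      fun s => H s s.2 s₀ s₀.2 t
    have h1 := H s₀ s₀.2 s s.2 t
    rw [abs_sub_comm] at h1
    simp only [neg_mul, Real.exp_neg]
    rwa [inv_mul_le_iff₀ (Real.exp_pos _)]
  have hA : Measurable fun t => (⟨clampTo a b α t, hmem t⟩ : J) := hα'.measurable.subtype_mk
  have := hmeas.comp (hA.prodMk measurable_id)
  simp only [Function.comp_def, Function.uncurry_def, id] at this
  refine ⟨fun t => cutSpeed d β a b (clampTo a b α t) t,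
    this, fun t ht => ?_⟩
  simp only [clampTo_of_mem α (Ioo_subset_Icc_self ht)]
  exact (cutSpeed_eq_genSpeed _ ht).symm

end Speed

section Perturbation

variable {X : Type*} [TopologicalSpace X] {I : Set ℝ} {d : ℝ → X → X → ℝ} {h : ℝ → X → ℝ}

theorem CondH.exists_le_exp_mul (hH : CondH I h) (hpos : ∀ s ∈ I, ∀ x : X, 0 < h s x)
    (hcont : ContinuousOn (fun z : ℝ × X => h z.1 z.2) (I ×ˢ (univ : Set X)))
    {J : Set ℝ} {K : Set X} (hJI : J ⊆ I) (hJ : IsCompact J) (hK : IsCompact K)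
    (hJne : J.Nonempty) (hKne : K.Nonempty) :
    ∃ D > 0, ∀ s ∈ J, ∀ s' ∈ J, ∀ x ∈ K, h s x ≤ Real.exp (D * |s - s'|) * h s' x := by
  obtain ⟨C, hC, H⟩ := hH J K hJI hJ hK
  obtain ⟨⟨s₀, x₀⟩, ⟨hs₀, -⟩, hmin⟩ := (hJ.prod hK).exists_isMinOn (hJne.prod hKne)
    (hcont.mono (prod_mono hJI (subset_univ K)))
  set m := h s₀ x₀ with hm
  have hm0 : 0 < m := hpos s₀ (hJI hs₀) x₀
  refine ⟨C / m, div_pos hC hm0, fun s hs s' hs' x hx => ?_⟩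
  have h1 : m ≤ h s' x := hmin (mk_mem_prod hs' hx)
  have h2 := (le_abs_self _).trans (H s hs s' hs' x hx)
  have h3 : C * |s - s'| ≤ C / m * |s - s'| * h s' x := by
    have : C * |s - s'| = C / m * |s - s'| * m := by field_simp
    rw [this]
    exact mul_le_mul_of_nonneg_left h1 (by positivity)
  have h4 := mul_le_mul_of_nonneg_right (Real.add_one_le_exp (C / m * |s - s'|))
    (hm0.le.trans h1)
  linarith

theorem ACOn.of_abs_sub_le {α α' : ℝ → ℝ} {a b A B : ℝ} (hA : 0 ≤ A) (hα : ACOn rdist α a b)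
    (H : ∀ t ∈ Icc a b, ∀ u ∈ Icc a b, t ≤ u →
      |α' t - α' u| ≤ A * |α t - α u| + B * (u - t)) : ACOn rdist α' a b := by
  obtain ⟨g, hg, Hg⟩ := hα
  refine ⟨fun r => A * g r + B, (hg.const_mul A).add (integrableOn_const (by simp)),
    fun t u ht hu htu => ?_⟩
  have hi : IntervalIntegrable g volume t u :=
    (intervalIntegrable_iff_integrableOn_Icc_of_le htu).2 (hg.mono_set (Icc_subset_Icc ht.1 hu.2))
  rw [intervalIntegral.integral_add (hi.const_mul A) intervalIntegrable_const,
    intervalIntegral.integral_const_mul, intervalIntegral.integral_const, smul_eq_mul]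
  have h1 := mul_le_mul_of_nonneg_left (Hg ht hu htu) hA
  have h2 := H t ht u hu htu
  simp only [rdist] at h1 ⊢
  linarith

theorem abs_exp_sub_exp_le {x y M : ℝ} (hx : Real.exp x ≤ M) (hy : Real.exp y ≤ M) :
    |Real.exp x - Real.exp y| ≤ M * |x - y| := by
  have key : ∀ x y : ℝ, Real.exp x ≤ M → Real.exp x - Real.exp y ≤ M * |x - y| := by
    intro x y hx
    have h1 := mul_le_mul_of_nonneg_left (Real.add_one_le_exp (y - x)) (Real.exp_pos x).le
    rw [← Real.exp_add, add_sub_cancel] at h1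
    have h2 := mul_le_mul_of_nonneg_left (le_abs_self (x - y)) (Real.exp_pos x).le
    have h3 := mul_le_mul_of_nonneg_right hx (abs_nonneg (x - y))
    linarith
  rw [abs_le]
  have := key y x hy
  rw [abs_sub_comm] at this
  exact ⟨by linarith, key x y hx⟩

theorem exp_le_one_add_two_mul {x : ℝ} (h0 : 0 ≤ x) (h1 : x ≤ 1) :
    Real.exp x ≤ 1 + 2 * x := by
  have := Real.abs_exp_sub_one_sub_id_le (x := x) (by rwa [abs_of_nonneg h0])
  have h2 := (abs_le.1 this).2
  nlinarith

theorem intervalIntegrable_of_abs_le_one {f : ℝ → ℝ} (hf : Measurable f) (hf1 : ∀ t, |f t| ≤ 1)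
    (s t : ℝ) : IntervalIntegrable f volume s t :=
  (intervalIntegrable_const (c := (1 : ℝ))).mono_fun hf.aestronglyMeasurable
    (.of_forall fun r => by simpa using hf1 r)

theorem abs_integral_le_of_abs_le_one {f : ℝ → ℝ} (hf1 : ∀ t, |f t| ≤ 1) (s t : ℝ) :
    |∫ r in s..t, f r| ≤ |t - s| := by
  simpa using intervalIntegral.norm_integral_le_of_norm_le_const (C := 1) (a := s) (b := t)
    (f := f) fun r _ => hf1 r

/-- Speeding up the time coordinate of a curve by `w = ε (∫ f) e^{σKα}` absorbs, through the
term `w' = K |w| α' + ⋯`, the Lipschitz change of the light cones caused by the shift. -/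
theorem FutureCausal.exists_perturbation (hIopen : IsOpen I) (hd : IsMetricFamily I d)
    (hdL : CondL I d) (hpos : ∀ s ∈ I, ∀ x : X, 0 < h s x)
    (hcont : ContinuousOn (fun z : ℝ × X => h z.1 z.2) (I ×ˢ (univ : Set X))) (hH : CondH I h)
    {α : ℝ → ℝ} {β : ℝ → X} {a b : ℝ} (hγ : FutureCausal I d h α β a b) {σ : ℝ}
    (hσ : σ = 1 ∨ σ = -1) :
    ∃ K : ℝ, ∃ ε₀ > 0, ∀ f : ℝ → ℝ, Measurable f → (∀ t, |f t| ≤ 1) → ∀ c ∈ Icc a b,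
      (∀ t ∈ Icc a b, 0 ≤ σ * ∫ r in c..t, f r) →
      (∀ᵐ t : ℝ, t ∈ Ioo a b → ∀ θ ∈ Ioo (0 : ℝ) 1,
        genSpeed d β (α t) t < h (α t) (β t) * (deriv α t + θ * f t)) →
      ∀ ε ∈ Ioo 0 ε₀, FutureTimelike I d h
        (fun t => α t + ε * (∫ r in c..t, f r) * Real.exp (σ * K * α t)) β a b := by
  obtain ⟨⟨hab, hα, hβ, hI⟩, hfd, hci⟩ := hγ
  have hαc := hα.continuousOn_real
  have hcompact : IsCompact (α '' Icc a b) := isCompact_Icc.image_of_continuousOn hαc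
  obtain ⟨δ, hδ, hJI⟩ := hcompact.exists_cthickening_subset_open hIopen
    (image_subset_iff.2 fun t ht => hI t ht)
  set J := Metric.cthickening δ (α '' Icc a b) with hJdef
  have hJ : IsCompact J := hcompact.cthickening
  have haI : α a ∈ I := hI a (left_mem_Icc.2 hab.le)
  have hαJ : ∀ t ∈ Icc a b, α t ∈ J := fun t ht =>
    Metric.self_subset_cthickening _ ⟨t, ht, rfl⟩
  have hJne : J.Nonempty := ⟨α a, hαJ a (left_mem_Icc.2 hab.le)⟩
  obtain ⟨C, hC, Hd⟩ := exists_genSpeed_le hd hdL hab.le hβ hJI hJ hJne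
  obtain ⟨D, hD, Hh⟩ := hH.exists_le_exp_mul hpos hcont hJI hJ
    (isCompact_Icc.image_of_continuousOn ((hβ _ haI).continuousOn hd haI)) hJne
    ((nonempty_Icc.2 hab.le).image β)
  set L := C + D with hL
  have hL0 : 0 < L := add_pos hC hD
  set K := 2 * L with hK
  obtain ⟨R, hR⟩ := hcompact.isBounded.exists_norm_le
  have hR' : ∀ t ∈ Icc a b, |α t| ≤ R := fun t ht => hR _ ⟨t, ht, rfl⟩
  set M := Real.exp (K * R) with hM
  have hM0 : 0 < M := Real.exp_pos _
  have hσabs : |σ| = 1 := by rcases hσ with rfl | rfl <;> simp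
  have hE : ∀ t ∈ Icc a b, Real.exp (σ * K * α t) ≤ M := by
    intro t ht
    refine Real.exp_le_exp.2 ((le_abs_self _).trans ?_)
    rw [abs_mul, abs_mul, hσabs, one_mul, abs_of_pos (by positivity)]
    exact mul_le_mul_of_nonneg_left (hR' t ht) (by positivity)
  have hba : 0 < b - a := sub_pos.2 hab
  refine ⟨K, min (1 / M) (min δ (1 / L) / ((b - a) * M)), by positivity,
    fun f hf hf1 c hc hsign hae ε hε => ?_⟩
  obtain ⟨hε0, hε1⟩ := hε
  obtain ⟨hεM, hεw⟩ := lt_min_iff.1 hε1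
  rw [lt_div_iff₀ hM0] at hεM
  rw [lt_div_iff₀ (by positivity)] at hεw
  obtain ⟨hwδ, hwL⟩ := lt_min_iff.1 hεw
  set Ψ : ℝ → ℝ := fun t => ∫ r in c..t, f r with hΨ
  set E : ℝ → ℝ := fun t => Real.exp (σ * K * α t) with hEdef
  have hΨle : ∀ t ∈ Icc a b, |Ψ t| ≤ b - a := by
    intro t ht
    refine (abs_integral_le_of_abs_le_one hf1 c t).trans ?_
    rw [abs_le]
    constructor <;> linarith [hc.1, hc.2, ht.1, ht.2]
  have hw : ∀ t ∈ Icc a b, |ε * Ψ t * E t| = ε * (σ * Ψ t) * E t := by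
    intro t ht
    have h1 : |Ψ t| = σ * Ψ t := by
      rw [← abs_of_nonneg (hsign t ht), abs_mul, hσabs, one_mul]
    rw [abs_mul, abs_mul, h1, abs_of_pos hε0, abs_of_pos (Real.exp_pos _)]
  have hwle : ∀ t ∈ Icc a b, |ε * Ψ t * E t| ≤ ε * ((b - a) * M) := by
    intro t ht
    rw [abs_mul, abs_mul, abs_of_pos hε0, abs_of_pos (Real.exp_pos _), mul_assoc]
    exact mul_le_mul_of_nonneg_left
      (mul_le_mul (hΨle t ht) (hE t ht) (Real.exp_pos _).le hba.le) hε0.le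
  have hJ' : ∀ t ∈ Icc a b, α t + ε * Ψ t * E t ∈ J := by
    intro t ht
    refine Metric.mem_cthickening_of_dist_le _ (α t) δ _ ⟨t, ht, rfl⟩ ?_
    rw [Real.dist_eq, add_sub_cancel_left]
    exact (hwle t ht).trans hwδ.le
  have hlocal : LocallyIntegrable f volume := by
    intro t
    refine ⟨Icc (t - 1) (t + 1), Icc_mem_nhds (by linarith) (by linarith), ?_⟩
    exact (intervalIntegrable_iff_integrableOn_Icc_of_le (by linarith)).1
      (intervalIntegrable_of_abs_le_one hf hf1 _ _)
  have hmain : ∀ᵐ t : ℝ, t ∈ Ioo a b →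
      0 ≤ genSpeed d β (α t + ε * Ψ t * E t) t ∧
      0 < h (α t + ε * Ψ t * E t) (β t) ∧
      genSpeed d β (α t + ε * Ψ t * E t) t <
        h (α t + ε * Ψ t * E t) (β t) * deriv (fun t => α t + ε * Ψ t * E t) t := by
    filter_upwards [hfd, hci, hae, LocallyIntegrable.ae_hasDerivAt_integral hlocal]
      with t htfd htci htae htf hmem
    have ht := Ioo_subset_Icc_self hmem
    specialize htfd hmem
    specialize htci hmem
    have hα' : HasDerivAt α (deriv α t) t :=
      (differentiableAt_of_deriv_ne_zero htfd.ne').hasDerivAt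
    have hder : HasDerivAt (fun t => α t + ε * Ψ t * E t) (deriv α t +
        (ε * f t * E t + ε * Ψ t * (E t * (σ * K * deriv α t)))) t :=
      hα'.add (((htf c).const_mul ε).mul ((hα'.const_mul (σ * K)).exp))
    rw [hder.deriv]
    set s' := α t + ε * Ψ t * E t with hs'
    have hs'J : s' ∈ J := hJ' t ht
    have hsJ : α t ∈ J := hαJ t ht
    have hh0 := hpos _ (hJI hsJ) (β t)
    have hh1 := hpos _ (hJI hs'J) (β t)
    have hv0 := genSpeed_nonneg (hd.nonneg (hJI hsJ)) β t
    have hv1 := genSpeed_nonneg (hd.nonneg (hJI hs'J)) β t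
    refine ⟨hv1, hh1, ?_⟩
    have hE0 : 0 < E t := Real.exp_pos _
    have hθ := htae hmem (ε * E t)
      ⟨by positivity, (mul_le_mul_of_nonneg_left (hE t ht) hε0.le).trans_lt hεM⟩
    have hA := Hd s' hs'J (α t) hsJ t hmem
    have hB := Hh (α t) hsJ s' hs'J (β t) ⟨t, ht, rfl⟩
    rw [abs_sub_comm] at hB
    have hs'w : |s' - α t| = ε * (σ * Ψ t) * E t := by
      rw [hs', add_sub_cancel_left, hw t ht]
    have hηL : L * |s' - α t| ≤ 1 := by
      have h1 : |s' - α t| ≤ 1 / L := by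
        rw [hs', add_sub_cancel_left]
        exact (hwle t ht).trans hwL.le
      rw [le_div_iff₀ hL0] at h1
      linarith
    have hexp := exp_le_one_add_two_mul (mul_nonneg hL0.le (abs_nonneg (s' - α t))) hηL
    have hη0 : 0 ≤ |s' - α t| := abs_nonneg _
    set η := |s' - α t| with hη
    set v₀ := genSpeed d β (α t) t
    set v₁ := genSpeed d β s' t
    set h₀ := h (α t) (β t)
    set h₁ := h s' (β t)
    have hAB : v₁ * h₀ ≤ (1 + K * η) * (v₀ * h₁) := by
      calc v₁ * h₀ ≤ (Real.exp (C * η) * v₀) * (Real.exp (D * η) * h₁) :=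
            mul_le_mul hA hB hh0.le (by positivity)
        _ = Real.exp (L * η) * (v₀ * h₁) := by rw [hL, add_mul, Real.exp_add]; ring
        _ ≤ (1 + K * η) * (v₀ * h₁) := by
            refine mul_le_mul_of_nonneg_right ?_ (by positivity)
            rw [hK]
            linarith
    have hv0le : v₀ ≤ h₀ * deriv α t := by
      refine le_of_sq_le_sq ?_ (by positivity)
      rw [mul_pow]
      exact htci
    have hfin : (1 + K * η) * v₀ < h₀ * (deriv α t +
        (ε * f t * E t + ε * Ψ t * (E t * (σ * K * deriv α t)))) := by
      have h1 : K * η * v₀ ≤ K * η * (h₀ * deriv α t) :=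
        mul_le_mul_of_nonneg_left hv0le (by positivity)
      have h2 : h₀ * (deriv α t + (ε * f t * E t + ε * Ψ t * (E t * (σ * K * deriv α t)))) =
          h₀ * (deriv α t + ε * E t * f t) + K * η * (h₀ * deriv α t) := by
        rw [hs'w]
        ring
      rw [h2]
      linarith
    have h3 := mul_lt_mul_of_pos_right hfin hh1
    refine lt_of_mul_lt_mul_right ?_ hh0.le
    linarith
  refine ⟨⟨hab, ?_, hβ, fun t ht => hJI (hJ' t ht)⟩, ?_, ?_⟩
  · refine hα.of_abs_sub_le (A := 1 + ε * (b - a) * (M * K)) (B := ε * M) (by positivity)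
      fun t ht u hu htu => ?_
    have h1 : |Ψ t - Ψ u| ≤ u - t := by
      have : Ψ u - Ψ t = ∫ r in t..u, f r :=
        intervalIntegral.integral_interval_sub_left
          (intervalIntegrable_of_abs_le_one hf hf1 _ _)
          (intervalIntegrable_of_abs_le_one hf hf1 _ _)
      rw [abs_sub_comm, this]
      exact (abs_integral_le_of_abs_le_one hf1 t u).trans_eq (abs_of_nonneg (sub_nonneg.2 htu))
    have h2 : |E t - E u| ≤ M * (K * |α t - α u|) := by
      have := abs_exp_sub_exp_le (hE t ht) (hE u hu)
      rwa [← mul_sub, abs_mul, abs_mul σ, hσabs, one_mul, abs_of_pos (show 0 < K by positivity)]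
        at this
    have h3 : α t + ε * Ψ t * E t - (α u + ε * Ψ u * E u) =
        (α t - α u) + (ε * (Ψ t * (E t - E u)) + ε * ((Ψ t - Ψ u) * E u)) := by ring
    have h4 : |ε * (Ψ t * (E t - E u))| ≤ ε * ((b - a) * (M * (K * |α t - α u|))) := by
      rw [abs_mul, abs_mul, abs_of_pos hε0]
      gcongr
      exact hΨle t ht
    have h5 : |ε * ((Ψ t - Ψ u) * E u)| ≤ ε * ((u - t) * M) := by
      rw [abs_mul, abs_mul, abs_of_pos hε0, abs_of_pos (Real.exp_pos _)]
      exact mul_le_mul_of_nonneg_left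
        (mul_le_mul h1 (hE u hu) (Real.exp_pos _).le (sub_nonneg.2 htu)) hε0.le
    rw [h3]
    have h6 := abs_add_le (α t - α u) (ε * (Ψ t * (E t - E u)) + ε * ((Ψ t - Ψ u) * E u))
    have h7 := abs_add_le (ε * (Ψ t * (E t - E u))) (ε * ((Ψ t - Ψ u) * E u))
    linarith
  · filter_upwards [hmain] with t ht hmem
    obtain ⟨h1, h2, h3⟩ := ht hmem
    exact pos_of_mul_pos_right (h1.trans_lt h3) h2.le
  · filter_upwards [hmain] with t ht hmem
    obtain ⟨h1, h2, h3⟩ := ht hmem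
    rw [← mul_pow]
    exact pow_lt_pow_left₀ h3 h1 two_ne_zero

/-- If a causal curve has room for its time coordinate to run at the rate `α' + τ θ g` with
`τ = ±1`, `g > 0`, then either endpoint can be shifted in time so as to be joined by a timelike
curve. -/
theorem FutureCausal.exists_chronRel_shift (hIopen : IsOpen I) (hd : IsMetricFamily I d)
    (hdL : CondL I d) (hpos : ∀ s ∈ I, ∀ x : X, 0 < h s x)
    (hcont : ContinuousOn (fun z : ℝ × X => h z.1 z.2) (I ×ˢ (univ : Set X))) (hH : CondH I h)
    {α : ℝ → ℝ} {β : ℝ → X} {a b : ℝ} (hγ : FutureCausal I d h α β a b) {τ : ℝ}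
    (hτ : τ = 1 ∨ τ = -1) {g : ℝ → ℝ} (hg : Measurable g) (hg0 : ∀ t, 0 < g t)
    (hg1 : ∀ t, g t ≤ 1)
    (hae : ∀ᵐ t : ℝ, t ∈ Ioo a b → ∀ θ ∈ Ioo (0 : ℝ) 1,
      genSpeed d β (α t) t < h (α t) (β t) * (deriv α t + θ * (τ * g t))) :
    (∃ η₀ > 0, ∀ η ∈ Ioo 0 η₀, chronRel I d h (α a, β a) (α b + τ * η, β b)) ∧
    ∃ η₀ > 0, ∀ η ∈ Ioo 0 η₀, chronRel I d h (α a - τ * η, β a) (α b, β b) := by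
  have hab := hγ.1.1
  have hτ2 : τ * τ = 1 := by rcases hτ with rfl | rfl <;> norm_num
  have hf1 : ∀ t, |τ * g t| ≤ 1 := by
    intro t
    have : |τ| = 1 := by rcases hτ with rfl | rfl <;> simp
    rw [abs_mul, this, one_mul, abs_of_pos (hg0 t)]
    exact hg1 t
  have hgi : ∀ s t, IntervalIntegrable g volume s t := intervalIntegrable_of_abs_le_one hg
    fun t => by rw [abs_of_pos (hg0 t)]; exact hg1 t
  have hG : 0 < ∫ r in a..b, g r := intervalIntegral.intervalIntegral_pos_of_pos (hgi a b) hg0 hab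
  constructor
  · obtain ⟨K, ε₀, hε₀, H⟩ := hγ.exists_perturbation hIopen hd hdL hpos hcont hH hτ
    have hA : 0 < (∫ r in a..b, g r) * Real.exp (τ * K * α b) := mul_pos hG (Real.exp_pos _)
    refine ⟨ε₀ * ((∫ r in a..b, g r) * Real.exp (τ * K * α b)), mul_pos hε₀ hA, fun η hη => ?_⟩
    have := H (fun t => τ * g t) (hg.const_mul τ) hf1 a (left_mem_Icc.2 hab.le) (fun t ht => by
      rw [intervalIntegral.integral_const_mul, ← mul_assoc, hτ2, one_mul]
      exact intervalIntegral.integral_nonneg ht.1 fun r _ => (hg0 r).le) hae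
      (η / ((∫ r in a..b, g r) * Real.exp (τ * K * α b)))
      ⟨div_pos hη.1 hA, by rw [div_lt_iff₀ hA]; exact hη.2⟩
    refine ⟨a, b, _, _, this, by simp, rfl, ?_, rfl⟩
    simp only [intervalIntegral.integral_const_mul]
    field_simp
  · have hτ' : -τ = 1 ∨ -τ = -1 := by rcases hτ with rfl | rfl <;> simp
    obtain ⟨K, ε₀, hε₀, H⟩ := hγ.exists_perturbation hIopen hd hdL hpos hcont hH hτ'
    have hA : 0 < (∫ r in a..b, g r) * Real.exp (-τ * K * α a) := mul_pos hG (Real.exp_pos _)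
    refine ⟨ε₀ * ((∫ r in a..b, g r) * Real.exp (-τ * K * α a)), mul_pos hε₀ hA, fun η hη => ?_⟩
    have := H (fun t => τ * g t) (hg.const_mul τ) hf1 b (right_mem_Icc.2 hab.le) (fun t ht => by
      rw [intervalIntegral.integral_const_mul, intervalIntegral.integral_symm, ← mul_assoc,
        neg_mul, hτ2, neg_one_mul, neg_neg]
      exact intervalIntegral.integral_nonneg ht.2 fun r _ => (hg0 r).le) hae
      (η / ((∫ r in a..b, g r) * Real.exp (-τ * K * α a)))
      ⟨div_pos hη.1 hA, by rw [div_lt_iff₀ hA]; exact hη.2⟩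
    refine ⟨a, b, _, _, this, ?_, rfl, by simp, rfl⟩
    simp only [intervalIntegral.integral_const_mul, intervalIntegral.integral_symm a b]
    field_simp
    ring

theorem causalRel.exists_chronRel_shift (hIopen : IsOpen I) (hd : IsMetricFamily I d)
    (hdL : CondL I d) (hpos : ∀ s ∈ I, ∀ x : X, 0 < h s x)
    (hcont : ContinuousOn (fun z : ℝ × X => h z.1 z.2) (I ×ˢ (univ : Set X))) (hH : CondH I h)
    {p q : ℝ × X} (hpq : causalRel I d h p q) :
    (∃ η₀ > 0, ∀ η ∈ Ioo 0 η₀, chronRel I d h p (q.1 + η, q.2)) ∧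
    ∃ η₀ > 0, ∀ η ∈ Ioo 0 η₀, chronRel I d h (p.1 - η, p.2) q := by
  obtain ⟨p₁, p₂⟩ := p
  obtain ⟨q₁, q₂⟩ := q
  obtain ⟨a, b, α, β, hγ, rfl, rfl, rfl, rfl⟩ := hpq
  have := hγ.exists_chronRel_shift hIopen hd hdL hpos hcont hH (Or.inl rfl) (τ := 1)
    (g := fun _ => 1) measurable_const (fun _ => one_pos) (fun _ => le_rfl) ?_
  · simpa only [one_mul] using this
  filter_upwards [hγ.2.1, hγ.2.2] with t hfd hci hmem θ hθ
  have hh := hpos _ (hγ.1.2.2.2 t (Ioo_subset_Icc_self hmem)) (β t)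
  specialize hfd hmem
  have hle : genSpeed d β (α t) t ≤ h (α t) (β t) * deriv α t := by
    refine le_of_sq_le_sq ?_ (by positivity)
    rw [mul_pow]
    exact hci hmem
  have := mul_pos hh hθ.1
  linarith

theorem chronRel.exists_chronRel_shift (hIopen : IsOpen I) (hd : IsMetricFamily I d)
    (hdL : CondL I d) (hpos : ∀ s ∈ I, ∀ x : X, 0 < h s x)
    (hcont : ContinuousOn (fun z : ℝ × X => h z.1 z.2) (I ×ˢ (univ : Set X))) (hH : CondH I h)
    {p q : ℝ × X} (hpq : chronRel I d h p q) :
    (∃ η₀ > 0, ∀ η ∈ Ioo 0 η₀, chronRel I d h p (q.1 - η, q.2)) ∧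
    ∃ η₀ > 0, ∀ η ∈ Ioo 0 η₀, chronRel I d h (p.1 + η, p.2) q := by
  obtain ⟨p₁, p₂⟩ := p
  obtain ⟨q₁, q₂⟩ := q
  obtain ⟨a, b, α, β, hγ, rfl, rfl, rfl, rfl⟩ := hpq
  obtain ⟨v, hv, hvγ⟩ := hγ.1.exists_measurable_genSpeed hd hdL
  obtain ⟨hab, hα, hβ, hI⟩ := hγ.1
  have haI : α a ∈ I := hI a (left_mem_Icc.2 hab.le)
  have hhc : Continuous fun t => h (clampTo a b α t) (clampTo a b β t) :=
    hcont.comp_continuous ((continuous_clampTo hab.le hα.continuousOn_real).prodMk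
      (continuous_clampTo hab.le ((hβ _ haI).continuousOn hd haI)))
      fun t => ⟨hI _ (max_min_mem_Icc hab.le t), mem_univ _⟩
  set D : ℝ → ℝ := fun t => deriv α t - v t / h (clampTo a b α t) (clampTo a b β t) with hDdef
  have hD : Measurable D := (measurable_deriv α).sub (hv.div hhc.measurable)
  have := hγ.futureCausal.exists_chronRel_shift hIopen hd hdL hpos hcont hH (Or.inr rfl) (τ := -1)
    (g := fun t => if 0 < D t then min 1 (D t) else 1)
    (Measurable.ite (measurableSet_lt measurable_const hD) (measurable_const.min hD)
      measurable_const) (fun t => ?_) (fun t => ?_) ?_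
  · simpa only [neg_one_mul, ← sub_eq_add_neg, sub_neg_eq_add] using this
  · split_ifs with ht
    · exact lt_min one_pos ht
    · exact one_pos
  · split_ifs
    · exact min_le_left _ _
    · exact le_rfl
  filter_upwards [hγ.2.1, hγ.2.2] with t hfd htl hmem θ hθ
  have ht := Ioo_subset_Icc_self hmem
  have hh := hpos _ (hI t ht) (β t)
  specialize hfd hmem
  have hlt : genSpeed d β (α t) t < h (α t) (β t) * deriv α t := by
    refine lt_of_pow_lt_pow_left₀ 2 (by positivity) ?_
    rw [mul_pow]
    exact htl hmem
  have hDt : h (α t) (β t) * D t = h (α t) (β t) * deriv α t - genSpeed d β (α t) t := by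
    simp only [hDdef, clampTo_of_mem α ht, clampTo_of_mem β ht, hvγ t hmem]
    field_simp
  have hD0 : 0 < D t := by
    refine pos_of_mul_pos_right ?_ hh.le
    rw [hDt]
    linarith
  have h1 : θ * min 1 (D t) < D t :=
    (mul_le_mul_of_nonneg_left (min_le_right 1 (D t)) hθ.1.le).trans_lt
      (mul_lt_of_lt_one_left hD0 hθ.2)
  have h2 := mul_lt_mul_of_pos_left h1 hh
  simp only [hD0, if_true]
  linarith

end Perturbation

/-- **Push-up property** (Theorem 1.3): under the local log-Lipschitz condition (L)
on the family of metrics and the time-Lipschitz condition (H) on `h`, the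
generalized Lorentzian product `hI ×_F X` satisfies push-up. -/
theorem pushup_of_condL_condH {X : Type*} [TopologicalSpace X] [LocallyCompactSpace X]
    (I : Set ℝ) (hIopen : IsOpen I) (hIord : I.OrdConnected) (hIne : I.Nonempty)
    (d : ℝ → X → X → ℝ) (hd : IsMetricFamily I d) (hdC : CondC I d) (hdL : CondL I d)
    (h : ℝ → X → ℝ) (hpos : ∀ s ∈ I, ∀ x : X, 0 < h s x)
    (hcont : ContinuousOn (fun z : ℝ × X => h z.1 z.2) (I ×ˢ (Set.univ : Set X)))
    (hH : CondH I h)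
    (p q r : ℝ × X)
    (hpq : (causalRel I d h p q ∧ chronRel I d h q r) ∨
           (chronRel I d h p q ∧ causalRel I d h q r)) :
    chronRel I d h p r := by
  have htri := fun s hs => (hd s hs).2.2.2.1
  have half_mem : ∀ {x y : ℝ}, 0 < x → 0 < y → min x y / 2 ∈ Ioo 0 x ∧ min x y / 2 ∈ Ioo 0 y := by
    intro x y hx hy
    have h0 := lt_min hx hy
    have h1 := half_lt_self h0
    exact ⟨⟨half_pos h0, h1.trans_le (min_le_left _ _)⟩, half_pos h0, h1.trans_le (min_le_right _ _)⟩
  rcases hpq with ⟨hpq, hqr⟩ | ⟨hpq, hqr⟩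
  · obtain ⟨η₁, hη₁, H₁⟩ := (hpq.exists_chronRel_shift hIopen hd hdL hpos hcont hH).1
    obtain ⟨η₂, hη₂, H₂⟩ := (hqr.exists_chronRel_shift hIopen hd hdL hpos hcont hH).2
    obtain ⟨h₁, h₂⟩ := half_mem hη₁ hη₂
    exact (H₁ _ h₁).trans htri (H₂ _ h₂)
  · obtain ⟨η₁, hη₁, H₁⟩ := (hpq.exists_chronRel_shift hIopen hd hdL hpos hcont hH).1
    obtain ⟨η₂, hη₂, H₂⟩ := (hqr.exists_chronRel_shift hIopen hd hdL hpos hcont hH).2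
    obtain ⟨h₁, h₂⟩ := half_mem hη₁ hη₂
    exact (H₁ _ h₁).trans htri (H₂ _ h₂)
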